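/- The analytic continuation of A to a slit disk at u_c satisfies, as u → u_c within the slit disk, A(u) = Â(1) + b·(1 − u/u_c)^{1/3} + O((1 − u/u_c)^{2/3}), where b = −(27/20)·(3/2)^{2/3} and the fractional powers are taken with the principal branch. -/

import Mathlib

noncomputable def nuc : ℝ := 1 + 2 * Real.sqrt 7

noncomputable def tc : ℝ := Real.sqrt 10 / (8 * (7 + Real.sqrt 7) ^ ((3:ℝ)/2))

noncomputable def uc : ℝ := (6/5) * (7 + Real.sqrt 7) * tc

/-- The rational parametrization `û` of the `u`-variable. -/
noncomputable def uhat (H : ℂ) : ℂ :=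
  ((uc : ℂ) / 3) * H * (10 - 12 * H + 6 * H ^ 2 - H ^ 3)

/-- The rational parametrization `Ẑ₀`. -/
noncomputable def Z0hat (H : ℂ) : ℂ :=
  (1/10) * (1 - (1 - (Real.sqrt 7 : ℂ)) * H + 3 * H ^ 2 - H ^ 3)
    * (10 - 12 * H + 6 * H ^ 2 - H ^ 3)

/-- The rational parametrization `Ẑ₁`. -/
noncomputable def Z1hat (H : ℂ) : ℂ :=
  (3 / (10 * (uc : ℂ))) *
    ((Real.sqrt 7 : ℂ) - 1 + H - 3 * (4 - 3 * H + H ^ 2) / (10 - 12 * H + 6 * H ^ 2 - H ^ 3))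

/-- The rational parametrization `Â`. -/
noncomputable def Ahat (H : ℂ) : ℂ :=
  (1/10) * ((((3:ℝ)/2) ^ ((7:ℝ)/3) : ℝ) : ℂ) * (9 - 8 * H + 3 * H ^ 2) / (3 - 3 * H + H ^ 2) ^ 2

noncomputable def bconst : ℝ := -(27/20) * ((3:ℝ)/2) ^ ((2:ℝ)/3)

/-- The slit disk at `x > 0` of margin `ε > 0`. -/
def slitDisk (x ε : ℝ) : Set ℂ :=
  Metric.ball (0 : ℂ) (x + ε) \ (Complex.ofReal '' Set.Icc x (x + ε))

/-!
Since `1 - û(1 - h)/u_c = h³(2 + h)/3`, this function is the cube of a local coordinate `ψ(h)` at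
`h = 0`. Hence `Â(1 - h) = B(ψ(h))` with `B` analytic at `0`, and `A(u)` should be
`B((1 - u/u_c)^{1/3})`; the expansion is then the first-order Taylor formula for `B`. To see that
the continuation really is this branch, follow it along the segment `H ∈ [0, 1)`, which `û` maps
into the slit disk: near `H = 1` the segment corresponds to positive values of `ψ`, where `ψ` is the
principal cube root of `ψ³`, and the identity theorem on a slit neighbourhood of `u_c` extends the
equality `A(u) = B((1 - u/u_c)^{1/3})` from there.
-/

open Filter Topology Asymptotics
open scoped ComplexOrder

section IdentityPrinciple

theorem eventuallyEq_nhds_of_isPreconnected {𝕜 F : Type*} [NontriviallyNormedField 𝕜]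
    [NormedAddCommGroup F] [NormedSpace 𝕜 F] {f g : 𝕜 → F} {K : Set 𝕜}
    (hf : AnalyticOnNhd 𝕜 f K) (hg : AnalyticOnNhd 𝕜 g K) (hK : IsPreconnected K)
    {a b : 𝕜} (ha : a ∈ K) (hb : b ∈ K) (hfg : f =ᶠ[𝓝 a] g) : f =ᶠ[𝓝 b] g := by
  rcases K.subsingleton_or_nontrivial with hsub | hnt
  · rwa [hsub hb ha]
  · have heqOn := hf.eqOn_of_preconnected_of_eventuallyEq hg hK ha hfg
    have hacc := accPt_iff_frequently_nhdsNE.mp (hK.preperfect_of_nontrivial hnt b hb)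
    exact ((hf b hb).frequently_eq_iff_eventually_eq (hg b hb)).mp
      (hacc.mono fun z hz => heqOn hz)

theorem isPreconnected_ball_inter_slitPlane (δ : ℝ) :
    IsPreconnected (Metric.ball (0 : ℂ) δ ∩ Complex.slitPlane) := by
  rcases le_or_gt δ 0 with hδ | hδ
  · simpa [Metric.ball_eq_empty.mpr hδ] using isPreconnected_empty
  have hball : ((δ / 2 : ℝ) : ℂ) ∈ Metric.ball (0 : ℂ) δ := by
    simpa [abs_of_pos hδ] using half_lt_self hδ
  have hstar : StarConvex ℝ ((δ / 2 : ℝ) : ℂ) (Metric.ball (0 : ℂ) δ ∩ Complex.slitPlane) :=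
    ((convex_ball 0 δ).starConvex hball).inter
      (Complex.starConvex_ofReal_slitPlane (half_pos hδ))
  exact (hstar.isPathConnected
    ⟨hball, Complex.ofReal_mem_slitPlane.mpr (half_pos hδ)⟩).isConnected.isPreconnected

theorem eventuallyEq_nhdsWithin_slitPlane_of_frequently {E : Type*} [NormedAddCommGroup E]
    [NormedSpace ℂ E] {f g : ℂ → E}
    (hf : ∀ᶠ w in 𝓝[Complex.slitPlane] 0, AnalyticAt ℂ f w)
    (hg : ∀ᶠ w in 𝓝[Complex.slitPlane] 0, AnalyticAt ℂ g w)
    (hfg : ∃ᶠ w in 𝓝[Complex.slitPlane] 0, f =ᶠ[𝓝 w] g) :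
    f =ᶠ[𝓝[Complex.slitPlane] 0] g := by
  obtain ⟨δ, hδ, hanalytic⟩ := Metric.mem_nhdsWithin_iff.mp (hf.and hg)
  have hmem : Metric.ball 0 δ ∩ Complex.slitPlane ∈ 𝓝[Complex.slitPlane] (0 : ℂ) :=
    inter_mem (mem_nhdsWithin_of_mem_nhds (Metric.ball_mem_nhds 0 hδ)) self_mem_nhdsWithin
  obtain ⟨a, hfga, ha⟩ := (hfg.and_eventually hmem).exists
  filter_upwards [hmem] with w hw
  exact AnalyticOnNhd.eqOn_of_preconnected_of_eventuallyEq (fun z hz => (hanalytic hz).1)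
    (fun z hz => (hanalytic hz).2) (isPreconnected_ball_inter_slitPlane δ) ha hfga hw

end IdentityPrinciple

section PrincipalRoot

variable {n : ℕ}

theorem tendsto_cpow_natCast_inv_nhds_zero (hn : n ≠ 0) :
    Tendsto (fun w : ℂ => w ^ (n⁻¹ : ℂ)) (𝓝 0) (𝓝 0) := by
  rw [tendsto_zero_iff_norm_tendsto_zero]
  simp only [Complex.norm_cpow_inv_nat]
  have hn' : (n : ℝ)⁻¹ ≠ 0 := inv_ne_zero (Nat.cast_ne_zero.mpr hn)
  simpa [Real.zero_rpow hn'] using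
    (tendsto_norm_zero (E := ℂ)).rpow_const (p := (n : ℝ)⁻¹) (Or.inr (by positivity))

theorem pow_cpow_natCast_inv_of_pos (hn : n ≠ 0) {z : ℂ} (hz : 0 < z) :
    (z ^ n) ^ (n⁻¹ : ℂ) = z := by
  have harg : z.arg = 0 := Complex.arg_eq_zero_iff_zero_le.mpr hz.le
  have hpi : 0 < Real.pi / n := by positivity
  exact Complex.pow_cpow_nat_inv hn (by linarith) (by linarith)

theorem analyticAt_cpow_const {w : ℂ} (hw : w ∈ Complex.slitPlane) (c : ℂ) :
    AnalyticAt ℂ (fun z : ℂ => z ^ c) w :=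
  analyticAt_id.cpow analyticAt_const hw

theorem eventually_analyticAt_comp_cpow_natCast_inv {E : Type*} [NormedAddCommGroup E]
    [NormedSpace ℂ E] [CompleteSpace E] {B : ℂ → E} (hn : n ≠ 0) (hB : AnalyticAt ℂ B 0) :
    ∀ᶠ w in 𝓝[Complex.slitPlane] 0, AnalyticAt ℂ (fun z : ℂ => B (z ^ (n⁻¹ : ℂ))) w := by
  have hroot := (tendsto_cpow_natCast_inv_nhds_zero hn).mono_left
    (nhdsWithin_le_nhds (s := Complex.slitPlane))
  filter_upwards [hroot.eventually hB.eventually_analyticAt, self_mem_nhdsWithin] with w hBw hw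
  exact hBw.fun_comp (f := fun z : ℂ => z ^ (n⁻¹ : ℂ)) (analyticAt_cpow_const hw _)

end PrincipalRoot

section Puiseux

theorem isBigO_sub_add_smul_of_analyticAt {𝕜 E : Type*} [NontriviallyNormedField 𝕜]
    [NormedAddCommGroup E] [NormedSpace 𝕜 E] {f : 𝕜 → E} {f' : E} {a : 𝕜}
    (hf : AnalyticAt 𝕜 f a) (hf' : HasDerivAt f f' a) :
    (fun h => f (a + h) - (f a + h • f')) =O[𝓝 0] fun h => ‖h‖ ^ 2 := by
  obtain ⟨p, hp⟩ := hf
  have hcoeff : p.coeff 1 = f' := hp.hasDerivAt.unique hf'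
  refine (hp.isBigO_sub_partialSum_pow 2).congr_left fun h => ?_
  have hsum : p.partialSum 2 h = f a + h • f' := by
    rw [FormalMultilinearSeries.partialSum, Finset.sum_range_succ, Finset.sum_range_one,
      hp.coeff_zero, p.apply_eq_pow_smul_coeff, pow_one, hcoeff]
  rw [hsum]

theorem exists_analyticAt_localInverse {𝕜 : Type*} [NontriviallyNormedField 𝕜] [CompleteSpace 𝕜]
    [CharZero 𝕜] {ψ : 𝕜 → 𝕜} {ψ' a : 𝕜} (hψ : AnalyticAt 𝕜 ψ a) (hψ' : HasDerivAt ψ ψ' a)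
    (hne : ψ' ≠ 0) :
    ∃ σ : 𝕜 → 𝕜, AnalyticAt 𝕜 σ (ψ a) ∧ HasDerivAt σ ψ'⁻¹ (ψ a) ∧
      (∀ᶠ h in 𝓝 a, σ (ψ h) = h) ∧ ∀ᶠ s in 𝓝 (ψ a), ψ (σ s) = s := by
  obtain rfl := hψ'.deriv
  exact ⟨_, hψ.analyticAt_localInverse hne, (hψ.hasStrictDerivAt.to_localInverse hne).hasDerivAt,
    HasStrictDerivAt.eventually_left_inverse .., HasStrictDerivAt.eventually_right_inverse ..⟩

theorem eventuallyEq_comp_cpow_natCast_inv_of_pow_comp {E : Type*} [NormedAddCommGroup E]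
    [NormedSpace ℂ E] [CompleteSpace E] {n : ℕ} (hn : n ≠ 0) {f F : ℂ → E} {ψ σ : ℂ → ℂ}
    (hf : ∀ᶠ w in 𝓝[Complex.slitPlane] 0, AnalyticAt ℂ f w)
    (hF : AnalyticAt ℂ F 0) (hσ : AnalyticAt ℂ σ 0) (hσ0 : σ 0 = 0) (hψ : Tendsto ψ (𝓝 0) (𝓝 0))
    (hleft : ∀ᶠ h in 𝓝 0, σ (ψ h) = h) (hright : ∀ᶠ s in 𝓝 0, ψ (σ s) = s)
    (hfF : ∃ᶠ h in 𝓝 0, 0 < ψ h ∧ ∀ᶠ z in 𝓝 h, f (ψ z ^ n) = F z) :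
    f =ᶠ[𝓝[Complex.slitPlane] 0] fun w => F (σ (w ^ (n⁻¹ : ℂ))) := by
  have hB : AnalyticAt ℂ (fun s => F (σ s)) 0 := hF.fun_comp_of_eq hσ hσ0
  refine eventuallyEq_nhdsWithin_slitPlane_of_frequently hf
    (eventually_analyticAt_comp_cpow_natCast_inv hn hB) ?_
  have hpow : Tendsto (fun h => ψ h ^ n) (𝓝 0) (𝓝 0) := by
    simpa [zero_pow hn] using hψ.pow n
  refine frequently_nhdsWithin_iff.mpr (hpow.frequently ?_)
  refine (hfF.and_eventually (hleft.and (hψ.eventually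
    (hright.eventually_nhds.and hσ.eventually_analyticAt)))).mono ?_
  rintro h ⟨⟨hpos, hfFh⟩, hσψ, hψσ, hσ_an⟩
  have hslit : ψ h ^ n ∈ Complex.slitPlane :=
    Complex.mem_slitPlane_iff_not_le_zero.mpr (pow_pos hpos n).not_ge
  have hroot : Tendsto (fun w : ℂ => w ^ (n⁻¹ : ℂ)) (𝓝 (ψ h ^ n)) (𝓝 (ψ h)) := by
    simpa only [ContinuousAt, pow_cpow_natCast_inv_of_pos hn hpos] using
      (analyticAt_cpow_const hslit (n⁻¹ : ℂ)).continuousAt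
  have hσroot : Tendsto (fun w : ℂ => σ (w ^ (n⁻¹ : ℂ))) (𝓝 (ψ h ^ n)) (𝓝 h) :=
    (hσψ ▸ hσ_an.continuousAt.tendsto).comp hroot
  refine ⟨?_, hslit⟩
  filter_upwards [hroot.eventually hψσ, hσroot.eventually hfFh] with w hψσw hfw
  rwa [hψσw, Complex.cpow_nat_inv_pow w hn] at hfw

theorem isBigO_sub_add_cpow_smul_of_pow_comp {E : Type*} [NormedAddCommGroup E] [NormedSpace ℂ E]
    [CompleteSpace E] {n : ℕ} (hn : n ≠ 0) {f F : ℂ → E} {F' : E} {ψ : ℂ → ℂ} {ψ' : ℂ}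
    (hf : ∀ᶠ w in 𝓝[Complex.slitPlane] 0, AnalyticAt ℂ f w)
    (hF : AnalyticAt ℂ F 0) (hF' : HasDerivAt F F' 0)
    (hψ : AnalyticAt ℂ ψ 0) (hψ0 : ψ 0 = 0) (hψ' : HasDerivAt ψ ψ' 0) (hne : ψ' ≠ 0)
    (hfF : ∃ᶠ h in 𝓝 0, 0 < ψ h ∧ ∀ᶠ z in 𝓝 h, f (ψ z ^ n) = F z) :
    (fun w => f w - (F 0 + w ^ (n⁻¹ : ℂ) • ψ'⁻¹ • F')) =O[𝓝[Complex.slitPlane] 0]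
      fun w => ‖w‖ ^ (2 / n : ℝ) := by
  obtain ⟨σ, hσ, hσ', hleft, hright⟩ := exists_analyticAt_localInverse hψ hψ' hne
  have hσ0 : σ 0 = 0 := by simpa only [hψ0] using hleft.self_of_nhds
  have hψ_tendsto : Tendsto ψ (𝓝 0) (𝓝 0) := by simpa only [hψ0] using hψ.continuousAt.tendsto
  rw [hψ0] at hσ hσ' hright
  have hbranch := eventuallyEq_comp_cpow_natCast_inv_of_pow_comp hn hf hF hσ hσ0 hψ_tendsto
    hleft hright hfF
  have hB : AnalyticAt ℂ (F ∘ σ) 0 := hF.comp_of_eq hσ hσ0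
  have hB' : HasDerivAt (F ∘ σ) (ψ'⁻¹ • F') 0 := hF'.scomp_of_eq 0 hσ' hσ0.symm
  have htaylor := (isBigO_sub_add_smul_of_analyticAt hB hB').comp_tendsto
    ((tendsto_cpow_natCast_inv_nhds_zero hn).mono_left
      (nhdsWithin_le_nhds (s := Complex.slitPlane)))
  refine htaylor.congr' ?_ (Eventually.of_forall fun w => ?_)
  · filter_upwards [hbranch] with w hw
    simp only [Function.comp_apply, zero_add, hσ0, hw]
  · simp only [Function.comp_apply, Complex.norm_cpow_inv_nat]
    rw [← Real.rpow_mul_natCast (norm_nonneg w), Nat.cast_ofNat, inv_mul_eq_div]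

end Puiseux

section SlitDisk

variable {x ε : ℝ} {u : ℂ}

theorem mem_slitDisk_iff (hx : 0 < x) :
    u ∈ slitDisk x ε ↔ ‖u‖ < x + ε ∧ 1 - u / x ∈ Complex.slitPlane := by
  have hslit : 1 - u / x ∈ Complex.slitPlane ↔ ¬ (x : ℂ) ≤ u := by
    rw [Complex.mem_slitPlane_iff_not_le_zero, sub_nonpos,
      one_le_div (Complex.zero_lt_real.mpr hx)]
  rw [slitDisk, Set.mem_sdiff, mem_ball_zero_iff, hslit]
  refine and_congr_right fun hu => not_congr ⟨?_, fun hxu => ?_⟩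
  · rintro ⟨t, ht, rfl⟩
    exact Complex.real_le_real.mpr ht.1
  · obtain ⟨hre, him⟩ := Complex.le_def.mp hxu
    exact ⟨u.re, ⟨hre, (Complex.re_le_norm u).trans hu.le⟩, Complex.ext rfl him⟩

theorem eventually_mul_one_sub_mem_slitDisk (hx : 0 < x) (hε : 0 < ε) :
    ∀ᶠ w : ℂ in 𝓝[Complex.slitPlane] 0, x * (1 - w) ∈ slitDisk x ε := by
  have hnorm : Tendsto (fun w : ℂ => ‖(x : ℂ) * (1 - w)‖)
      (𝓝[Complex.slitPlane] 0) (𝓝 x) :=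
    (Continuous.tendsto' (by fun_prop) _ _ (by simp [hx.le])).mono_left nhdsWithin_le_nhds
  have hx' : (x : ℂ) ≠ 0 := Complex.ofReal_ne_zero.mpr hx.ne'
  filter_upwards [hnorm.eventually_lt_const (lt_add_of_pos_right x hε), self_mem_nhdsWithin]
    with w hw hslit
  rw [mem_slitDisk_iff hx, mul_div_cancel_left₀ _ hx', sub_sub_cancel]
  exact ⟨hw, hslit⟩

theorem tendsto_one_sub_div_nhdsWithin_slitDisk (hx : 0 < x) :
    Tendsto (fun u : ℂ => 1 - u / x) (𝓝[slitDisk x ε] x) (𝓝[Complex.slitPlane] 0) := by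
  have hx' : (x : ℂ) ≠ 0 := Complex.ofReal_ne_zero.mpr hx.ne'
  refine tendsto_nhdsWithin_iff.mpr ⟨?_, ?_⟩
  · exact (Continuous.tendsto' (by fun_prop) _ _ (by simp [hx'])).mono_left nhdsWithin_le_nhds
  · filter_upwards [self_mem_nhdsWithin] with u hu using ((mem_slitDisk_iff hx).mp hu).2

end SlitDisk

section Parametrization

theorem uc_pos : 0 < uc := by
  unfold uc tc
  positivity

theorem uhat_eq (H : ℂ) : uhat H = uc * (1 - (1 - H) ^ 3 * (3 - H) / 3) := by
  rw [uhat]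
  ring

theorem analyticAt_uhat (H : ℂ) : AnalyticAt ℂ uhat H := by
  unfold uhat
  fun_prop

theorem analyticAt_Ahat {H : ℂ} (hH : 3 - 3 * H + H ^ 2 ≠ 0) : AnalyticAt ℂ Ahat H := by
  unfold Ahat
  exact AnalyticAt.div (by fun_prop) (by fun_prop) (pow_ne_zero 2 hH)

theorem analyticAt_Ahat_ofReal (t : ℝ) : AnalyticAt ℂ Ahat t := by
  have hpos : 0 < 3 - 3 * t + t ^ 2 := by nlinarith [sq_nonneg (t - 3 / 2)]
  exact analyticAt_Ahat (by exact_mod_cast hpos.ne')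

theorem hasDerivAt_Ahat_one : HasDerivAt Ahat ((6 / 10 * (3 / 2) ^ (7 / 3 : ℝ) : ℝ) : ℂ) 1 := by
  have hnum : HasDerivAt (fun H : ℂ => 9 - 8 * H + 3 * H ^ 2) (-2) 1 := by
    have := (((hasDerivAt_id (1 : ℂ)).const_mul 8).const_sub 9).add
      (((hasDerivAt_id (1 : ℂ)).pow 2).const_mul 3)
    convert! this using 1
    norm_num
  have hden : HasDerivAt (fun H : ℂ => (3 - 3 * H + H ^ 2) ^ 2) (-2) 1 := by
    have := ((((hasDerivAt_id (1 : ℂ)).const_mul 3).const_sub 3).add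
      ((hasDerivAt_id (1 : ℂ)).pow 2)).pow 2
    convert! this using 1
    norm_num
  have := (hnum.const_mul ((1 / 10) * ((((3 : ℝ) / 2) ^ ((7 : ℝ) / 3) : ℝ) : ℂ))).div hden
    (by norm_num)
  convert! this using 1
  norm_num
  ring

theorem uhat_ofReal_mem_slitDisk {ε t : ℝ} (hε : 0 < ε) (ht : t ∈ Set.Ico 0 1) :
    uhat t ∈ slitDisk uc ε := by
  have huc := uc_pos
  obtain ⟨ht0, ht1⟩ := ht
  have hpos : 0 < (1 - t) ^ 3 * (3 - t) / 3 := by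
    have := sub_pos.mpr ht1
    have : 0 < 3 - t := by linarith
    positivity
  have hle : (1 - t) ^ 3 * (3 - t) / 3 ≤ 1 := by
    have hcube : (1 - t) ^ 3 ≤ 1 := pow_le_one₀ (by linarith) (by linarith)
    nlinarith
  have huhat : uhat t = ((uc * (1 - (1 - t) ^ 3 * (3 - t) / 3) : ℝ) : ℂ) := by
    rw [uhat_eq]
    push_cast
    rfl
  rw [mem_slitDisk_iff huc, huhat, Complex.norm_real, ← Complex.ofReal_div,
    mul_div_cancel_left₀ _ huc.ne', ← Complex.ofReal_one, ← Complex.ofReal_sub,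
    Complex.ofReal_mem_slitPlane, sub_sub_cancel, Real.norm_of_nonneg (by nlinarith)]
  exact ⟨by nlinarith, hpos⟩

theorem eventually_comp_uhat_eq_Ahat {g : ℂ → ℂ} {ε : ℝ} (hε : 0 < ε)
    (hg : AnalyticOnNhd ℂ g (slitDisk uc ε)) (hgA : ∀ᶠ H in 𝓝 0, g (uhat H) = Ahat H) {t : ℝ}
    (ht : t ∈ Set.Ico 0 1) : ∀ᶠ H in 𝓝 (t : ℂ), g (uhat H) = Ahat H := by
  refine eventuallyEq_nhds_of_isPreconnected (f := fun H => g (uhat H)) (a := 0)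
    (K := Complex.ofReal '' Set.Ico 0 1) ?_ ?_
    (isPreconnected_Ico.image _ Complex.continuous_ofReal.continuousOn)
    ⟨0, by simp, by simp⟩ ⟨t, ht, rfl⟩ hgA
  · rintro _ ⟨s, hs, rfl⟩
    exact (hg _ (uhat_ofReal_mem_slitDisk hε hs)).fun_comp (analyticAt_uhat s)
  · rintro _ ⟨s, -, rfl⟩
    exact analyticAt_Ahat_ofReal s

/-- The cube root of `1 - û(1 - h)/u_c` that is a local coordinate at `h = 0`; the principal branch
is applied only to the factor `(2 + h)/3`, which is close to `2/3`. -/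
noncomputable def uhatCubeRoot (h : ℂ) : ℂ := h * ((2 + h) / 3) ^ (3⁻¹ : ℂ)

theorem uhat_one_sub (h : ℂ) : uhat (1 - h) = uc * (1 - uhatCubeRoot h ^ 3) := by
  rw [uhatCubeRoot, mul_pow, Complex.cpow_ofNat_inv_pow, uhat_eq]
  ring

theorem analyticAt_uhatCubeRoot_zero : AnalyticAt ℂ uhatCubeRoot 0 := by
  unfold uhatCubeRoot
  exact analyticAt_id.mul (AnalyticAt.cpow (by fun_prop) analyticAt_const (by left; norm_num))

theorem hasDerivAt_uhatCubeRoot_zero :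
    HasDerivAt uhatCubeRoot (((2 / 3) ^ (3⁻¹ : ℝ) : ℝ) : ℂ) 0 := by
  have hroot : DifferentiableAt ℂ (fun h : ℂ => ((2 + h) / 3) ^ (3⁻¹ : ℂ)) 0 :=
    DifferentiableAt.cpow_const (by fun_prop) (by left; norm_num)
  have := (hasDerivAt_id (0 : ℂ)).mul hroot.hasDerivAt
  convert! this using 1
  simp [Complex.ofReal_cpow (show (0 : ℝ) ≤ 2 / 3 by norm_num)]

theorem uhatCubeRoot_ofReal_pos {x : ℝ} (hx : 0 < x) : 0 < uhatCubeRoot x := by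
  have hreal : uhatCubeRoot x = ((x * ((2 + x) / 3) ^ (3⁻¹ : ℝ) : ℝ) : ℂ) := by
    rw [uhatCubeRoot, Complex.ofReal_mul, Complex.ofReal_cpow (by positivity)]
    push_cast
    rfl
  rw [hreal, Complex.zero_lt_real]
  positivity

theorem bconst_eq_div :
    bconst = -(6 / 10 * (3 / 2) ^ (7 / 3 : ℝ)) / (2 / 3) ^ (3⁻¹ : ℝ) := by
  have hinv : ((2 : ℝ) / 3) ^ (3⁻¹ : ℝ) = ((3 / 2) ^ (3⁻¹ : ℝ))⁻¹ := by
    rw [← Real.inv_rpow (by norm_num)]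
    norm_num
  have hsplit : ((3 : ℝ) / 2) ^ (7 / 3 : ℝ) * (3 / 2) ^ (3⁻¹ : ℝ) =
      (3 / 2) ^ 2 * (3 / 2) ^ (2 / 3 : ℝ) := by
    rw [← Real.rpow_natCast, ← Real.rpow_add (by norm_num), ← Real.rpow_add (by norm_num)]
    norm_num
  rw [bconst, hinv, div_inv_eq_mul]
  linear_combination (6 / 10) * hsplit

theorem frequently_comp_uhatCubeRoot_pow_eq {g : ℂ → ℂ} {ε : ℝ} (hε : 0 < ε)
    (hg : AnalyticOnNhd ℂ g (slitDisk uc ε)) (hgA : ∀ᶠ H in 𝓝 0, g (uhat H) = Ahat H) :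
    ∃ᶠ h in 𝓝 (0 : ℂ), 0 < uhatCubeRoot h ∧
      ∀ᶠ z in 𝓝 h, g (uc * (1 - uhatCubeRoot z ^ 3)) = Ahat (1 - z) := by
  have hreal : Tendsto Complex.ofReal (𝓝[>] 0) (𝓝 0) :=
    (Complex.continuous_ofReal.tendsto' 0 0 (by simp)).mono_left nhdsWithin_le_nhds
  refine hreal.frequently (Eventually.frequently ?_)
  filter_upwards [Ioc_mem_nhdsGT one_pos] with x hx
  refine ⟨uhatCubeRoot_ofReal_pos hx.1, ?_⟩
  have hcont : Tendsto (fun z : ℂ => 1 - z) (𝓝 x) (𝓝 ((1 - x : ℝ) : ℂ)) :=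
    Continuous.tendsto' (by fun_prop) _ _ (by simp)
  have ht : 1 - x ∈ Set.Ico 0 1 := ⟨sub_nonneg.mpr hx.2, sub_lt_self 1 hx.1⟩
  filter_upwards [hcont.eventually (eventually_comp_uhat_eq_Ahat hε hg hgA ht)] with z hz
  rwa [← uhat_one_sub]

end Parametrization

/-- the analytic continuation `g` of `A = Â ∘ û⁻¹` to a slit disk at `u_c`
satisfies `g(u) = Â(1) + b (1 − u/u_c)^{1/3} + O((1 − u/u_c)^{2/3})` as `u → u_c` within
the slit disk, where `b = −(27/20)(3/2)^{2/3}` (principal branch powers). -/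
theorem statement8
    (ρ : ℝ) (hρ : 0 < ρ)
    (g : ℂ → ℂ) (ε : ℝ) (hε : 0 < ε)
    (hg_an : ∀ w ∈ slitDisk uc ε, AnalyticAt ℂ g w)
    -- `g` is the analytic continuation of `A = Â ∘ û⁻¹`
    (hg : ∀ H : ℂ, ‖H‖ < ρ → g (uhat H) = Ahat H) :
    Asymptotics.IsBigO (nhdsWithin ((uc : ℝ) : ℂ) (slitDisk uc ε))
      (fun u : ℂ => g u - (Ahat 1 + (bconst : ℂ) * (1 - u / ((uc : ℝ) : ℂ)) ^ ((1 : ℂ)/3)))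
      (fun u : ℂ => ‖1 - u / ((uc : ℝ) : ℂ)‖ ^ ((2:ℝ)/3)) := by
  have huc : (uc : ℂ) ≠ 0 := Complex.ofReal_ne_zero.mpr uc_pos.ne'
  have hgA : ∀ᶠ H in 𝓝 0, g (uhat H) = Ahat H := by
    filter_upwards [Metric.ball_mem_nhds (0 : ℂ) hρ] with H hH using hg H (mem_ball_zero_iff.mp hH)
  have hg_near : ∀ᶠ w in 𝓝[Complex.slitPlane] 0, AnalyticAt ℂ (fun w => g (uc * (1 - w))) w := by
    filter_upwards [eventually_mul_one_sub_mem_slitDisk uc_pos hε] with w hw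
    exact (hg_an _ hw).fun_comp (f := fun w : ℂ => uc * (1 - w)) (by fun_prop)
  have hA : AnalyticAt ℂ (fun h => Ahat (1 - h)) 0 :=
    AnalyticAt.fun_comp (by simpa using analyticAt_Ahat_ofReal 1) (by fun_prop)
  have hA' : HasDerivAt (fun h => Ahat (1 - h)) _ 0 :=
    HasDerivAt.comp_const_sub 1 0 (by simpa using hasDerivAt_Ahat_one)
  have hψ' : (((2 / 3) ^ (3⁻¹ : ℝ) : ℝ) : ℂ) ≠ 0 := Complex.ofReal_ne_zero.mpr (by positivity)
  have hpuiseux := isBigO_sub_add_cpow_smul_of_pow_comp three_ne_zero hg_near hA hA'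
    analyticAt_uhatCubeRoot_zero (by simp [uhatCubeRoot]) hasDerivAt_uhatCubeRoot_zero hψ'
    (frequently_comp_uhatCubeRoot_pow_eq hε hg_an hgA)
  refine (hpuiseux.comp_tendsto (tendsto_one_sub_div_nhdsWithin_slitDisk uc_pos)).congr
    (fun u => ?_) fun u => by simp
  simp [bconst_eq_div, mul_div_cancel₀ _ huc]
  ring
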